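/- arXiv:2411.14538 — 2 statements merged into one kernel-verified Lean document; each statement's English description precedes it below -/
import Mathlib

section
/- One-way permutation automata (1PerFA) and one-way reversible automata with a single accepting state (1RFA₁) are incomparable in expressive power: there exists a language recognized by some 1PerFA but by no 1RFA₁, and there exists a language recognized by some 1RFA₁ but by no 1PerFA. -/
open scoped Classical

/-- Run a partial transition function along a word. -/
def runP {A Q : Type} (d : A → Q → Option Q) (q : Q) (w : List A) : Option Q :=
  w.foldl (fun o a => o.bind (d a)) (some q)

/-- One-way reversible finite automaton (1RFA): a partial deterministic automaton
with a single initial state and injective transition functions. -/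
structure RFA (A Q : Type) where
  start : Q
  next : A → Q → Option Q
  inj : ∀ a q q' r, next a q = some r → next a q' = some r → q = q'
  accept : Set Q

def RFA.Language {A Q : Type} (M : RFA A Q) : Set (List A) :=
  {w | ∃ qf ∈ M.accept, runP M.next M.start w = some qf}

/-- A permutation automaton (1PerFA): every transition function is a totally
defined bijection. -/
def RFA.IsPerm {A Q : Type} (M : RFA A Q) : Prop :=
  (∀ a q, (M.next a q).isSome) ∧ ∀ a r, ∃ q, M.next a q = some r

/-- One-way reversible finite automaton with multiple initial states (MRFA). -/
structure MRFA (A Q : Type) where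
  init : Set Q
  next : A → Q → Option Q
  inj : ∀ a q q' r, next a q = some r → next a q' = some r → q = q'
  accept : Set Q

def MRFA.Language {A Q : Type} (M : MRFA A Q) : Set (List A) :=
  {w | ∃ q0 ∈ M.init, ∃ qf ∈ M.accept, runP M.next q0 w = some qf}

def Rec1RFA (A : Type) (L : Set (List A)) : Prop :=
  ∃ (Q : Type) (_ : Fintype Q) (M : RFA A Q), M.Language = L

def Rec1RFA1 (A : Type) (L : Set (List A)) : Prop :=
  ∃ (Q : Type) (_ : Fintype Q) (M : RFA A Q), M.accept.ncard = 1 ∧ M.Language = L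

def Rec1PerFA (A : Type) (L : Set (List A)) : Prop :=
  ∃ (Q : Type) (_ : Fintype Q) (M : RFA A Q), M.IsPerm ∧ M.Language = L

def Rec1PerFA1 (A : Type) (L : Set (List A)) : Prop :=
  ∃ (Q : Type) (_ : Fintype Q) (M : RFA A Q),
    M.IsPerm ∧ M.accept.ncard = 1 ∧ M.Language = L

def RecMRFA (A : Type) (L : Set (List A)) : Prop :=
  ∃ (Q : Type) (_ : Fintype Q) (M : MRFA A Q), M.Language = L

/-- Sweeping reversible automaton (sRFA), given without its accepting set:
states `Qp` move rightwards, states `Qm` move leftwards; `startT` is the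
transition of the left end-marker function on the initial state, `turnL` its
restriction to `Qm`, and `turnR` is the transition function at the right
end-marker.  All transition functions are partial and injective, and the left
end-marker function is injective on the whole of `{q₀} ∪ Q₋`. -/
structure SRFA (A Qp Qm : Type) where
  start : Qp
  nextP : A → Qp → Option Qp
  nextM : A → Qm → Option Qm
  startT : Option Qp
  turnL : Qm → Option Qp
  turnR : Qp → Option Qm
  injP : ∀ a q q' r, nextP a q = some r → nextP a q' = some r → q = q'
  injM : ∀ a q q' r, nextM a q = some r → nextM a q' = some r → q = q'
  injL : ∀ q q' r, turnL q = some r → turnL q' = some r → q = q'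
  injR : ∀ q q' r, turnR q = some r → turnR q' = some r → q = q'
  startT_ne_turnL : ∀ q r, startT = some r → turnL q ≠ some r

/-- One step of a sweeping automaton on input `⊢w⊣`: a configuration is a state
together with a head position in `{0, 1, …, |w| + 1}`, where position `0` is the
left end-marker, position `i` with `1 ≤ i ≤ |w|` carries the `i`-th input
symbol, and position `|w| + 1` is the right end-marker.  The result is `none`
when the corresponding transition is undefined and the computation halts. -/
noncomputable def SRFA.step {A Qp Qm : Type} (M : SRFA A Qp Qm) (w : List A) :
    (Qp ⊕ Qm) × ℕ → Option ((Qp ⊕ Qm) × ℕ)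
  | (Sum.inl q, i) =>
      if i = 0 then
        if q = M.start then M.startT.map (fun p => (Sum.inl p, 1)) else none
      else if i = w.length + 1 then
        (M.turnR q).map (fun r => (Sum.inr r, w.length))
      else
        (w[i - 1]?.bind (fun a => M.nextP a q)).map (fun p => (Sum.inl p, i + 1))
  | (Sum.inr q, i) =>
      if i = 0 then (M.turnL q).map (fun p => (Sum.inl p, 1))
      else if i = w.length + 1 then none
      else (w[i - 1]?.bind (fun a => M.nextM a q)).map (fun r => (Sum.inr r, i - 1))

/-- The configuration reached after `n` steps of the computation on `w`,
starting in the initial state at the left end-marker (or `none` if the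
computation has halted before). -/
noncomputable def SRFA.steps {A Qp Qm : Type} (M : SRFA A Qp Qm) (w : List A) :
    ℕ → Option ((Qp ⊕ Qm) × ℕ)
  | 0 => some (Sum.inl M.start, 0)
  | n + 1 => (M.steps w n).bind (M.step w)

/-- Acceptance of an ordinary sRFA: the computation halts at the right
end-marker in an accepting state `q ∈ F ⊆ Q₊`. -/
def SRFA.AcceptsR {A Qp Qm : Type} (M : SRFA A Qp Qm) (F : Set Qp) (w : List A) : Prop :=
  ∃ n q, M.steps w n = some (Sum.inl q, w.length + 1) ∧ q ∈ F ∧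
    M.step w (Sum.inl q, w.length + 1) = none

def SRFA.LangR {A Qp Qm : Type} (M : SRFA A Qp Qm) (F : Set Qp) : Set (List A) :=
  {w | M.AcceptsR F w}

/-- Acceptance of an sRFA with acceptance at both sides: the computation halts
at either end-marker in an accepting state `c ∈ F ⊆ Q₊ ∪ Q₋`. -/
def SRFA.AcceptsB {A Qp Qm : Type} (M : SRFA A Qp Qm) (F : Set (Qp ⊕ Qm)) (w : List A) : Prop :=
  ∃ n c i, M.steps w n = some (c, i) ∧ c ∈ F ∧ (i = 0 ∨ i = w.length + 1) ∧
    M.step w (c, i) = none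

def SRFA.LangB {A Qp Qm : Type} (M : SRFA A Qp Qm) (F : Set (Qp ⊕ Qm)) : Set (List A) :=
  {w | M.AcceptsB F w}

def RecSRFA (A : Type) (L : Set (List A)) : Prop :=
  ∃ (Qp Qm : Type) (_ : Fintype Qp) (_ : Fintype Qm) (M : SRFA A Qp Qm) (F : Set Qp),
    M.LangR F = L

/-!
If a 1RFA₁ accepts `u` and `v`, it is in its unique accepting state after either word, so `u` and
`v` have the same right extensions in its language. Counting the length modulo `3` and accepting the
residues `0` and `1` breaks this: `ε` and `a` are accepted, `εa` is accepted, but `aa` is not.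

In a finite 1PerFA every word `w` acts as a permutation of the states, and a positive power of that
permutation is the identity, so some `wⁿ` with `n > 0` can be inserted anywhere without affecting
acceptance. This fails for the language `{ε}`.
-/

section Run

variable {A Q : Type} (d : A → Q → Option Q) (q : Q)

theorem runP_cons (a : A) (w : List A) :
    runP d q (a :: w) = (d a q).bind fun r => runP d r w := by
  cases h : d a q with
  | some r => simp only [runP, List.foldl_cons, Option.bind_some, h]
  | none =>
    simp only [runP, List.foldl_cons, Option.bind_some, Option.bind_none, h]
    exact List.foldl_fixed' (fun _ => rfl) w

theorem runP_append (u v : List A) :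
    runP d q (u ++ v) = (runP d q u).bind fun r => runP d r v := by
  induction u generalizing q with
  | nil => rfl
  | cons a u ih => simp only [List.cons_append, runP_cons, ih, Option.bind_assoc]

variable {d}

theorem runP_flatten_replicate {w : List A} {f : Q → Q} (hf : ∀ q, runP d q w = some (f q))
    (n : ℕ) : runP d q (List.replicate n w).flatten = some (f^[n] q) := by
  induction n generalizing q with
  | zero => rfl
  | succ n ih =>
    rw [List.replicate_succ, List.flatten_cons, runP_append, hf, Option.bind_some, ih,
      Function.iterate_succ_apply]

end Run

section SingleAcceptingState

variable {A : Type} {u v : List A}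

theorem RFA.append_mem_language_iff_of_subsingleton_accept {Q : Type} {M : RFA A Q}
    (hM : M.accept.Subsingleton) (hu : u ∈ M.Language) (hv : v ∈ M.Language) (w : List A) :
    u ++ w ∈ M.Language ↔ v ++ w ∈ M.Language := by
  obtain ⟨p, hp, hup⟩ := hu
  obtain ⟨q, hq, hvq⟩ := hv
  obtain rfl : p = q := hM hp hq
  simp only [RFA.Language, Set.mem_ofPred_eq, runP_append, hup, hvq]

theorem Rec1RFA1.append_mem_iff {L : Set (List A)} (hL : Rec1RFA1 A L) (hu : u ∈ L) (hv : v ∈ L)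
    (w : List A) : u ++ w ∈ L ↔ v ++ w ∈ L := by
  obtain ⟨Q, _, M, hM, rfl⟩ := hL
  exact RFA.append_mem_language_iff_of_subsingleton_accept
    (Set.ncard_le_one_iff_subsingleton.mp hM.le) hu hv w

end SingleAcceptingState

section Permutation

variable {A : Type}

theorem RFA.IsPerm.exists_perm_next {Q : Type} {M : RFA A Q} (hM : M.IsPerm) (a : A) :
    ∃ σ : Equiv.Perm Q, ∀ q, M.next a q = some (σ q) := by
  choose f hf using fun q => Option.isSome_iff_exists.mp (hM.1 a q)
  have f_injective : f.Injective := fun p q hpq => M.inj a p q (f p) (hf p) (hpq ▸ hf q)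
  have f_surjective : f.Surjective := fun r =>
    (hM.2 a r).imp fun q hq => Option.some.inj ((hf q).symm.trans hq)
  exact ⟨Equiv.ofBijective f ⟨f_injective, f_surjective⟩, hf⟩

theorem RFA.IsPerm.exists_perm_runP {Q : Type} {M : RFA A Q} (hM : M.IsPerm) (w : List A) :
    ∃ σ : Equiv.Perm Q, ∀ q, runP M.next q w = some (σ q) := by
  induction w with
  | nil => exact ⟨1, fun _ => rfl⟩
  | cons a w ih =>
    obtain ⟨σ, hσ⟩ := ih
    obtain ⟨τ, hτ⟩ := hM.exists_perm_next a
    refine ⟨σ * τ, fun q => ?_⟩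
    rw [runP_cons, hτ, Option.bind_some, hσ, Equiv.Perm.mul_apply]

theorem Rec1PerFA.exists_flatten_replicate_mem_iff {L : Set (List A)} (hL : Rec1PerFA A L)
    (w : List A) :
    ∃ n > 0, ∀ u v, u ++ (List.replicate n w).flatten ++ v ∈ L ↔ u ++ v ∈ L := by
  obtain ⟨Q, _, M, hM, rfl⟩ := hL
  obtain ⟨σ, hσ⟩ := hM.exists_perm_runP w
  have run_power (q : Q) :
      runP M.next q (List.replicate (orderOf σ) w).flatten = some q := by
    rw [runP_flatten_replicate q hσ, Equiv.Perm.iterate_eq_pow, pow_orderOf_eq_one,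
      Equiv.Perm.one_apply]
  refine ⟨orderOf σ, orderOf_pos σ, fun u v => ?_⟩
  simp only [RFA.Language, Set.mem_ofPred_eq, runP_append, run_power, Option.bind_fun_some]

end Permutation

section GroupLanguage

variable {A G : Type} [AddGroup G] (φ : A → G) (S : Set G)

/-- The Cayley automaton of a map `φ` from the alphabet to a group: its states are the group
elements, the symbol `a` acts by right translation by `φ a`, and `S` is the accepting set. The group
is written additively because the application is to `ZMod 3`. -/
def RFA.cayley : RFA A G where
  start := 0
  next a g := some (g + φ a)
  inj _ _ _ _ h h' := add_right_cancel (Option.some.inj (h.trans h'.symm))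
  accept := S

theorem RFA.isPerm_cayley : (RFA.cayley φ S).IsPerm :=
  ⟨fun _ _ => rfl, fun a g => ⟨g - φ a, congrArg some (sub_add_cancel g (φ a))⟩⟩

theorem RFA.runP_cayley (g : G) (w : List A) :
    runP (RFA.cayley φ S).next g w = some (g + (w.map φ).sum) := by
  induction w generalizing g with
  | nil => exact congrArg some (add_zero g).symm
  | cons a w ih =>
    rw [runP_cons, List.map_cons, List.sum_cons, ← add_assoc]
    exact ih (g + φ a)

theorem RFA.language_cayley : (RFA.cayley φ S).Language = {w | (w.map φ).sum ∈ S} := by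
  ext w
  simp only [RFA.Language, RFA.runP_cayley, Option.some.injEq, exists_eq_right', Set.mem_ofPred_eq]
  simp only [RFA.cayley, zero_add]

theorem rec1PerFA_setOf_sum_map_mem [Finite G] : Rec1PerFA A {w | (w.map φ).sum ∈ S} :=
  ⟨G, Fintype.ofFinite G, RFA.cayley φ S, RFA.isPerm_cayley φ S, RFA.language_cayley φ S⟩

end GroupLanguage

section Separation

variable (A : Type)

theorem rec1PerFA_setOf_length_mem {m : ℕ} [NeZero m] (S : Set (ZMod m)) :
    Rec1PerFA A {w | (w.length : ZMod m) ∈ S} := by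
  simpa using rec1PerFA_setOf_sum_map_mem (fun _ : A => (1 : ZMod m)) S

theorem not_rec1RFA1_setOf_length_mem [Nonempty A] :
    ¬ Rec1RFA1 A {w | (w.length : ZMod 3) ∈ ({0, 1} : Set (ZMod 3))} := by
  intro h
  obtain ⟨a⟩ := ‹Nonempty A›
  have right_extension_iff := h.append_mem_iff (u := []) (v := [a]) (by simp) (by simp) [a]
  have two_mem : (2 : ZMod 3) ∈ ({0, 1} : Set (ZMod 3)) := by simpa using right_extension_iff
  exact absurd two_mem (by decide)

/-- The one-state automaton without transitions, which accepts only the empty word. -/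
def RFA.emptyWord : RFA A Unit where
  start := ()
  next _ _ := none
  inj _ _ _ _ h := nomatch h
  accept := {()}

theorem RFA.language_emptyWord : (RFA.emptyWord A).Language = {[]} := by
  ext w
  cases w with
  | nil => simp [RFA.Language, RFA.emptyWord, runP]
  | cons a w => simp [RFA.Language, RFA.emptyWord, runP_cons]

theorem rec1RFA1_singleton_nil : Rec1RFA1 A {[]} :=
  ⟨Unit, inferInstance, RFA.emptyWord A, Set.ncard_singleton (), RFA.language_emptyWord A⟩

theorem not_rec1PerFA_singleton_nil [Nonempty A] : ¬ Rec1PerFA A {[]} := by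
  intro h
  obtain ⟨a⟩ := ‹Nonempty A›
  obtain ⟨n, n_pos, hn⟩ := h.exists_flatten_replicate_mem_iff [a]
  have power_eq_nil : (List.replicate n [a]).flatten = [] := by simpa using hn [] []
  simp [n_pos.ne'] at power_eq_nil

theorem stmt4_general [Nonempty A] :
    (∃ L : Set (List A), Rec1PerFA A L ∧ ¬ Rec1RFA1 A L) ∧
    (∃ L : Set (List A), Rec1RFA1 A L ∧ ¬ Rec1PerFA A L) :=
  ⟨⟨_, rec1PerFA_setOf_length_mem A _, not_rec1RFA1_setOf_length_mem A⟩,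
    ⟨_, rec1RFA1_singleton_nil A, not_rec1PerFA_singleton_nil A⟩⟩

end Separation

/-- 1PerFA and 1RFA₁ are incomparable in expressive power. -/
theorem stmt4 :
    (∃ (A : Type) (L : Set (List A)), Rec1PerFA A L ∧ ¬ Rec1RFA1 A L) ∧
    (∃ (A : Type) (L : Set (List A)), Rec1RFA1 A L ∧ ¬ Rec1PerFA A L) :=
  ⟨⟨Unit, (stmt4_general Unit).1⟩, ⟨Unit, (stmt4_general Unit).2⟩⟩
end

section
/- Over the one-letter alphabet {a}, the language (aa)* ∪ {a} = { aⁿ : n is even } ∪ {a} is recognized by some sweeping reversible automaton (sRFA). -/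
open scoped Classical

/-- The unary language `(aa)* ∪ {a}`. -/
def LevenOrA : Set (List Unit) := {w | w.length % 2 = 0 ∨ w = [()]}

/-!
A right-moving sweep can compute the parity of the length reversibly, which settles inputs of even
length. On an input of odd length the automaton turns around at the right end-marker and reads one
letter leftwards, after which it is stuck on every further letter: it gets back to the left
end-marker exactly when the length is one, and only then makes a last sweep to the right and
accepts.
-/

theorem runP_concat {A Q : Type} (d : A → Q → Option Q) (q : Q) (w : List A) (a : A) :
    runP d q (w ++ [a]) = (runP d q w).bind (d a) := by
  simp [runP]

namespace SRFA

variable {A Qp Qm : Type} {M : SRFA A Qp Qm} {F : Set Qp} {w : List A}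
  {c d : (Qp ⊕ Qm) × ℕ}

theorem step_start : M.step w (Sum.inl M.start, 0) = M.startT.map fun p => (Sum.inl p, 1) := by
  simp [step]

theorem step_inl_right_end (q : Qp) :
    M.step w (Sum.inl q, w.length + 1) = (M.turnR q).map fun r => (Sum.inr r, w.length) := by
  simp [step]

theorem step_inr_left_end (q : Qm) :
    M.step w (Sum.inr q, 0) = (M.turnL q).map fun p => (Sum.inl p, 1) := by
  simp [step]

theorem step_inl_append_cons (u v : List A) (a : A) (q : Qp) :
    M.step (u ++ a :: v) (Sum.inl q, u.length + 1) =
      (M.nextP a q).map fun p => (Sum.inl p, u.length + 2) := by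
  simp [step]

theorem step_inr_append_cons (u v : List A) (a : A) (q : Qm) :
    M.step (u ++ a :: v) (Sum.inr q, u.length + 1) =
      (M.nextM a q).map fun r => (Sum.inr r, u.length) := by
  simp [step]

/-- The computation of `M` on `w` passes through the configuration `c`. The number of steps is left
unspecified, so that sweeps can be chained without counting them. -/
def Reaches (M : SRFA A Qp Qm) (w : List A) (c : (Qp ⊕ Qm) × ℕ) : Prop :=
  ∃ n, M.steps w n = some c

theorem reaches_start : M.Reaches w (Sum.inl M.start, 0) :=
  ⟨0, rfl⟩

theorem Reaches.step (hc : M.Reaches w c) (h : M.step w c = some d) : M.Reaches w d := by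
  obtain ⟨n, hn⟩ := hc
  exact ⟨n + 1, by rw [steps, hn, Option.bind_some, h]⟩

theorem steps_eq_none_of_lt {m n : ℕ} (hm : M.steps w m = some c) (h : M.step w c = none)
    (hmn : m < n) : M.steps w n = none := by
  induction n, hmn using Nat.le_induction with
  | base => rw [steps, hm, Option.bind_some, h]
  | succ n _ ih => rw [steps, ih, Option.bind_none]

theorem Reaches.eq_of_step_eq_none (hc : M.Reaches w c) (hd : M.Reaches w d)
    (hc' : M.step w c = none) (hd' : M.step w d = none) : c = d := by
  obtain ⟨m, hm⟩ := hc
  obtain ⟨n, hn⟩ := hd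
  rcases lt_trichotomy m n with hmn | rfl | hnm
  · simp [steps_eq_none_of_lt hm hc' hmn] at hn
  · exact Option.some.inj (hm.symm.trans hn)
  · simp [steps_eq_none_of_lt hn hd' hnm] at hm

theorem Reaches.acceptsR_iff (hc : M.Reaches w c) (h : M.step w c = none) :
    M.AcceptsR F w ↔ ∃ q ∈ F, c = (Sum.inl q, w.length + 1) := by
  constructor
  · rintro ⟨n, q, hn, hq, hhalt⟩
    exact ⟨q, hq, hc.eq_of_step_eq_none ⟨n, hn⟩ h hhalt⟩
  · rintro ⟨q, hq, rfl⟩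
    obtain ⟨n, hn⟩ := hc
    exact ⟨n, q, hn, hq, h⟩

theorem Reaches.inl_of_runP_append {u v : List A} {p q : Qp}
    (hp : M.Reaches (u ++ v) (Sum.inl p, 1)) (h : runP M.nextP p u = some q) :
    M.Reaches (u ++ v) (Sum.inl q, u.length + 1) := by
  induction u using List.reverseRecOn generalizing v q with
  | nil =>
    obtain rfl : p = q := Option.some.inj h
    exact hp
  | append_singleton u a ih =>
    rw [runP_concat] at h
    obtain ⟨r, hr, hrq⟩ := Option.bind_eq_some_iff.mp h
    rw [List.append_assoc, List.singleton_append] at hp ⊢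
    rw [List.length_append, List.length_singleton]
    exact (ih hp hr).step (by rw [step_inl_append_cons, hrq, Option.map_some])

theorem Reaches.inl_of_runP {p q : Qp} (hp : M.Reaches w (Sum.inl p, 1))
    (h : runP M.nextP p w = some q) : M.Reaches w (Sum.inl q, w.length + 1) := by
  have hp' : M.Reaches (w ++ []) (Sum.inl p, 1) := by rwa [List.append_nil]
  simpa only [List.append_nil] using hp'.inl_of_runP_append h

end SRFA

/-- The right-moving states of `evenOrSingle`: `even` and `odd` record the parity of the number of
letters read in the first sweep, and `single` belongs to the second sweep to the right. -/
inductive RightState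
  | even
  | odd
  | single

noncomputable instance : Fintype RightState :=
  ⟨{.even, .odd, .single}, by rintro (_ | _ | _) <;> simp⟩

/-- The left-moving states of `evenOrSingle`: `fresh` may still read one letter, `spent` none. -/
inductive LeftState
  | fresh
  | spent

noncomputable instance : Fintype LeftState :=
  ⟨{.fresh, .spent}, by rintro (_ | _) <;> simp⟩

/-- The sweeping reversible automaton which, with accepting states `even` and `single`, recognizes
the words whose length is even or one. It does not look at which letters it reads. -/
def evenOrSingle (A : Type) : SRFA A RightState LeftState where
  start := .even
  nextP _
    | .even => some .odd
    | .odd => some .even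
    | .single => some .single
  nextM _
    | .fresh => some .spent
    | .spent => none
  startT := some .even
  turnL
    | .fresh => none
    | .spent => some .single
  turnR
    | .odd => some .fresh
    | .even | .single => none
  injP := by rintro - (_ | _ | _) (_ | _ | _) (_ | _ | _) <;> simp
  injM := by rintro - (_ | _) (_ | _) (_ | _) <;> simp
  injL := by rintro (_ | _) (_ | _) (_ | _ | _) <;> simp
  injR := by rintro (_ | _ | _) (_ | _ | _) (_ | _) <;> simp
  startT_ne_turnL := by rintro (_ | _) (_ | _ | _) <;> simp

namespace evenOrSingle

open SRFA

variable {A : Type}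

theorem runP_nextP_even (w : List A) :
    runP (evenOrSingle A).nextP .even w = some (if Even w.length then .even else .odd) := by
  induction w using List.reverseRecOn with
  | nil => rfl
  | append_singleton w a ih =>
    rw [runP_concat, ih]
    by_cases h : Even w.length <;> simp [evenOrSingle, h, Nat.even_add_one]

theorem reaches_right_end (w : List A) :
    (evenOrSingle A).Reaches w
      (Sum.inl (if Even w.length then .even else .odd), w.length + 1) :=
  (reaches_start.step step_start).inl_of_runP (runP_nextP_even w)

theorem reaches_spent_of_even {u : List A} (hu : Even u.length) (a : A) :
    (evenOrSingle A).Reaches (u ++ [a]) (Sum.inr .spent, u.length) := by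
  have hodd : (evenOrSingle A).Reaches (u ++ [a]) (Sum.inl .odd, (u ++ [a]).length + 1) := by
    simpa [Nat.even_add_one, hu] using reaches_right_end (u ++ [a])
  have hfresh : (evenOrSingle A).Reaches (u ++ [a]) (Sum.inr .fresh, u.length + 1) := by
    simpa using hodd.step (step_inl_right_end _)
  exact hfresh.step (step_inr_append_cons u [] a _)

theorem acceptsR_of_even {w : List A} (hw : Even w.length) :
    (evenOrSingle A).AcceptsR {.even, .single} w := by
  have heven : (evenOrSingle A).Reaches w (Sum.inl .even, w.length + 1) := by
    simpa only [if_pos hw] using reaches_right_end w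
  exact (heven.acceptsR_iff (step_inl_right_end _)).mpr ⟨.even, .inl rfl, rfl⟩

theorem acceptsR_singleton (a : A) : (evenOrSingle A).AcceptsR {.even, .single} [a] := by
  have hspent : (evenOrSingle A).Reaches [a] (Sum.inr .spent, 0) :=
    reaches_spent_of_even (u := []) Even.zero a
  have hsingle : (evenOrSingle A).Reaches [a] (Sum.inl .single, 2) :=
    (hspent.step (step_inr_left_end _)).inl_of_runP rfl
  exact (hsingle.acceptsR_iff (step_inl_right_end _)).mpr ⟨.single, .inr rfl, rfl⟩

theorem not_acceptsR_append_pair {v : List A} (hv : Odd v.length) (b a : A)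
    (F : Set RightState) : ¬ (evenOrSingle A).AcceptsR F (v ++ [b] ++ [a]) := by
  have hvb : Even (v ++ [b]).length := by simpa using hv.add_one
  have hspent : (evenOrSingle A).Reaches (v ++ [b] ++ [a]) (Sum.inr .spent, v.length + 1) := by
    simpa using reaches_spent_of_even hvb a
  have hstuck : (evenOrSingle A).step (v ++ [b] ++ [a]) (Sum.inr .spent, v.length + 1) = none := by
    rw [List.append_assoc]
    exact step_inr_append_cons v [a] b _
  rw [hspent.acceptsR_iff hstuck]
  rintro ⟨q, -, hq⟩
  cases hq

theorem langR_even_single :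
    (evenOrSingle A).LangR {.even, .single} = {w | Even w.length ∨ w.length = 1} := by
  ext w
  change (evenOrSingle A).AcceptsR _ w ↔ Even w.length ∨ w.length = 1
  by_cases hw : Even w.length
  · exact iff_of_true (acceptsR_of_even hw) (.inl hw)
  rcases w.eq_nil_or_concat' with rfl | ⟨u, a, rfl⟩
  · exact absurd Even.zero hw
  rcases u.eq_nil_or_concat' with rfl | ⟨v, b, rfl⟩
  · exact iff_of_true (acceptsR_singleton a) (.inr rfl)
  · have hv : Odd v.length := by simpa [Nat.even_add_one] using hw
    exact iff_of_false (not_acceptsR_append_pair hv b a _) (not_or_intro hw (by simp))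

end evenOrSingle

theorem levenOrA_eq_even_or_length_eq_one : LevenOrA = {w | Even w.length ∨ w.length = 1} := by
  ext w
  have hsingle : w = [()] ↔ w.length = 1 := by
    rw [List.length_eq_one_iff, Unique.exists_iff, PUnit.default_eq_unit]
  simp only [LevenOrA, Set.mem_ofPred_eq, hsingle, Nat.even_iff]

theorem stmt8_general (A : Type) : RecSRFA A {w | Even w.length ∨ w.length = 1} :=
  ⟨RightState, LeftState, inferInstance, inferInstance, evenOrSingle A, _,
    evenOrSingle.langR_even_single⟩

/-- `(aa)* ∪ {a}` is recognized by some sweeping reversible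
automaton. -/
theorem stmt8 : RecSRFA Unit LevenOrA :=
  levenOrA_eq_even_or_length_eq_one ▸ stmt8_general Unit
end
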